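/- For every integer n ≥ 2: (1) the set X = cl((1+2^n)^ℕ) ∈ 𝒳_2 coincides with 1+2^nℕ₀ and has i(X) = 2^{n-1}; (2) the set Y = cl((2^n-1)^ℕ) ∈ 𝒳_2 coincides with (1+2^{n+1}ℕ₀) ∪ (2^n-1+2^{n+1}ℕ₀) and has i(Y) = 2^{n-1}. -/

import Mathlib

/-!
Both bases `a = 1 + 2 ^ n` and `a = 2 ^ n - 1` satisfy `1 < a < 2 ^ (n + 1)` and
`a ^ 2 = 1 + 2 ^ (n + 1) * c` with `c = 2 ^ (n - 1) ± 1` odd, and this is all the argument uses.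

Repeated squaring gives `a ^ (2 * 2 ^ j) = 1 + 2 ^ (n + 1 + j) * odd`, so a congruence
`a ^ k ≡ y` modulo `2 ^ N` can be improved one binary digit at a time (`exists_pow_congr`).
Hence the closure of the powers of `a` is the full preimage of the residues `{1, a}` modulo
`2 ^ (n + 1)` (`clPow_eq`). Such a preimage has at most two residues modulo `2 ^ m` for
`m ≤ n + 1` and exactly four modulo `2 ^ (n + 2)`, so `n(X) = n + 2` and
`i(X) = 2 ^ (n + 1) / 4` (`iX_eq`).
-/

open TopologicalSpace

/-- The arithmetic progression `a + bℕ₀ = {a + b*n : n ≥ 0}` inside the positive integers. -/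
def golombBasic (a b : ℕ) : Set ℕ+ := {x : ℕ+ | ∃ n : ℕ, (x : ℕ) = a + b * n}

/-- The Golomb topology on the positive integers, generated by the arithmetic
progressions `a + bℕ₀` with coprime `a, b ∈ ℕ`. -/
instance golombTopology : TopologicalSpace ℕ+ :=
  generateFrom {S : Set ℕ+ | ∃ a b : ℕ, 0 < a ∧ 0 < b ∧ Nat.Coprime a b ∧ S = golombBasic a b}

/-- The positive integers not divisible by `p` (the set `ℕ \ pℕ`). -/
abbrev Np (p : ℕ) : Type := {x : ℕ+ // ¬ p ∣ (x : ℕ)}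

/-- The `p`-adic topology on `ℕ \ pℕ`, generated by the traces of the sets
`x + p^nℕ₀`, `x, n ∈ ℕ`. -/
def padicTop (p : ℕ) : TopologicalSpace (Np p) :=
  generateFrom {S : Set (Np p) | ∃ x n : ℕ, 0 < x ∧ 0 < n ∧
    S = {y : Np p | ∃ k : ℕ, ((y : ℕ+) : ℕ) = x + p ^ n * k}}

/-- Closure of a set of positive integers in the `p`-adic topology on `ℕ \ pℕ`,
viewed again as a set of positive integers. -/
def padicClosure (p : ℕ) (A : Set ℕ+) : Set ℕ+ :=
  Subtype.val '' (@closure (Np p) (padicTop p) (Subtype.val ⁻¹' A))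

/-- `a^ℕ = {a^k : k ∈ ℕ}`, the set of positive powers of `a`. -/
def powSet (a : ℕ) : Set ℕ+ := {y : ℕ+ | ∃ k : ℕ, 0 < k ∧ (y : ℕ) = a ^ k}

/-- The closure of `a^ℕ` in the `p`-adic topology on `ℕ \ pℕ`. -/
def clPow (p a : ℕ) : Set ℕ+ := padicClosure p (powSet a)

/-- The family `𝒳_p` of closures of the sets `a^ℕ` for `a ∈ ℕ \ pℕ`, `a ≠ 1`. -/
def XX (p : ℕ) : Set (Set ℕ+) := {X | ∃ a : ℕ, 0 < a ∧ a ≠ 1 ∧ ¬ p ∣ a ∧ X = clPow p a}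

/-- The projection `π_n(X)` of a set of positive integers to `ℤ/p^nℤ`. -/
def pin (p n : ℕ) (X : Set ℕ+) : Set (ZMod (p ^ n)) :=
  (fun y : ℕ+ => ((y : ℕ) : ZMod (p ^ n))) '' X

/-- `n(X)`: the least `n ∈ ℕ` with `X = ℕ ∩ π_n⁻¹(π_n(X))` and `|π_n(X)| ≥ max(p,3)`. -/
noncomputable def nX (p : ℕ) (X : Set ℕ+) : ℕ :=
  sInf {n : ℕ | 0 < n ∧ X = {y : ℕ+ | ((y : ℕ) : ZMod (p ^ n)) ∈ pin p n X} ∧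
    max p 3 ≤ (pin p n X).ncard}

/-- `i(X)`: the index of the subgroup `π_{n(X)}(X)` in the group of units of `ℤ/p^{n(X)}ℤ`. -/
noncomputable def iX (p : ℕ) (X : Set ℕ+) : ℕ :=
  Nat.card ((ZMod (p ^ nX p X))ˣ) / (pin p (nX p X) X).ncard

/-! ### Density of the powers -/

/-- Squaring raises the 2-adic valuation of `a ^ (2 * 2 ^ j) - 1` by exactly one. -/
lemma pow_two_mul_two_pow {a c : ℤ} {n : ℕ} (hn : 1 ≤ n) (hc : Odd c)
    (ha : a ^ 2 = 1 + 2 ^ (n + 1) * c) (j : ℕ) :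
    ∃ d : ℤ, Odd d ∧ a ^ (2 * 2 ^ j) = 1 + 2 ^ (n + 1 + j) * d := by
  induction j with
  | zero => exact ⟨c, hc, by simpa using ha⟩
  | succ j ih =>
    obtain ⟨d, hd, h⟩ := ih
    refine ⟨d + 2 ^ (n + j) * d ^ 2, ?_, ?_⟩
    · have : Even ((2 : ℤ) ^ (n + j)) := (even_two).pow_of_ne_zero (by omega)
      exact hd.add_even (this.mul_right _)
    · rw [pow_succ 2 j, ← mul_assoc, pow_mul, h]
      ring

/-- A residue modulo `2 ^ (n + 1)` attained by a power of `a` lifts to every higher level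
`2 ^ N`, with arbitrarily large exponents: when `a ^ k` and `y` agree modulo `2 ^ N` only,
multiplying by `a ^ (2 * 2 ^ j)`, which is `1 + 2 ^ N` modulo `2 ^ (N + 1)`, repairs the
next binary digit. -/
lemma exists_pow_congr {a c y : ℤ} {n r : ℕ} (hn : 1 ≤ n) (hc : Odd c)
    (ha : a ^ 2 = 1 + 2 ^ (n + 1) * c) (hy : 2 ^ (n + 1) ∣ a ^ r - y) (K j : ℕ) :
    ∃ k, K ≤ k ∧ (2 : ℤ) ^ (n + 1 + j) ∣ a ^ k - y := by
  have ha1 : Odd a := by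
    have : Odd (a ^ 2) := by
      rw [ha]
      exact odd_one.add_even (((even_two).pow_of_ne_zero (by omega)).mul_right _)
    exact (Int.odd_pow' (by omega)).1 this
  induction j with
  | zero =>
    refine ⟨r + 2 * K, by omega, ?_⟩
    have h1 : (2 : ℤ) ^ (n + 1) ∣ (a ^ 2) ^ K - 1 := by
      have := sub_dvd_pow_sub_pow (a ^ 2) 1 K
      rw [one_pow] at this
      exact (Dvd.intro c (by rw [ha]; ring)).trans this
    have h2 : a ^ (r + 2 * K) - y = a ^ r * ((a ^ 2) ^ K - 1) + (a ^ r - y) := by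
      rw [pow_add, pow_mul]; ring
    rw [h2]
    exact dvd_add (h1.mul_left _) hy
  | succ j ih =>
    obtain ⟨k, hk, t, ht⟩ := ih
    rcases Int.even_or_odd t with ⟨s, hs⟩ | hodd
    · exact ⟨k, hk, s, by rw [ht, hs]; ring⟩
    · obtain ⟨d, hd, h⟩ := pow_two_mul_two_pow hn hc ha j
      obtain ⟨s, hs⟩ := hodd.add_odd ((ha1.pow (n := k)).mul hd)
      refine ⟨k + 2 * 2 ^ j, by omega, s, ?_⟩
      rw [pow_add, h]
      calc a ^ k * (1 + 2 ^ (n + 1 + j) * d) - y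
          = (a ^ k - y) + 2 ^ (n + 1 + j) * (a ^ k * d) := by ring
        _ = 2 ^ (n + 1 + j) * (t + a ^ k * d) := by rw [ht]; ring
        _ = _ := by rw [hs]; ring

/-! ### The 2-adic closure -/

/-- Every open neighbourhood of `y` contains a progression `y + 2 ^ N ℕ₀`. -/
lemma exists_progression_subset {U : Set (Np 2)} (hU : @IsOpen _ (padicTop 2) U)
    {y : Np 2} (hy : y ∈ U) :
    ∃ N : ℕ, ∀ z : Np 2, (∃ k : ℕ, ((z : ℕ+) : ℕ) = ((y : ℕ+) : ℕ) + 2 ^ N * k) → z ∈ U := by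
  induction hU with
  | basic S hS =>
    obtain ⟨x, n, -, -, rfl⟩ := hS
    obtain ⟨l, hl⟩ := hy
    exact ⟨n, fun z ⟨k, hk⟩ => ⟨l + k, by rw [hk, hl]; ring⟩⟩
  | univ => exact ⟨0, fun _ _ => trivial⟩
  | inter S T _ _ ihS ihT =>
    obtain ⟨N, hN⟩ := ihS hy.1
    obtain ⟨M, hM⟩ := ihT hy.2
    refine ⟨N + M, fun z ⟨k, hk⟩ => ⟨hN z ⟨2 ^ M * k, ?_⟩, hM z ⟨2 ^ N * k, ?_⟩⟩⟩ <;>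
      rw [hk, pow_add] <;> ring
  | sUnion S _ ih =>
    obtain ⟨T, hT, hyT⟩ := hy
    obtain ⟨N, hN⟩ := ih T hT hyT
    exact ⟨N, fun z hz => ⟨T, hT, hN z hz⟩⟩

/-- The progressions `y + 2 ^ N ℕ₀` start at `y`, so closeness to `y` includes being at
least `y`. -/
lemma mem_clPow_iff {a : ℕ} (ha : ¬ 2 ∣ a) {y : ℕ+} :
    y ∈ clPow 2 a ↔ ∀ N : ℕ, 0 < N → ∃ k l : ℕ, 0 < k ∧ a ^ k = (y : ℕ) + 2 ^ N * l := by
  have hpow : ∀ k, ¬ 2 ∣ a ^ k := fun k h => ha (Nat.prime_two.dvd_of_dvd_pow h)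
  constructor
  · rintro ⟨w, hw, rfl⟩ N hN
    have hopen : @IsOpen _ (padicTop 2)
        {z : Np 2 | ∃ k : ℕ, ((z : ℕ+) : ℕ) = ((w : ℕ+) : ℕ) + 2 ^ N * k} :=
      GenerateOpen.basic _ ⟨_, N, (w : ℕ+).pos, hN, rfl⟩
    obtain ⟨z, ⟨l, hl⟩, k, hk, hz⟩ :=
      (@mem_closure_iff _ (padicTop 2) _ _).1 hw _ hopen ⟨0, by simp⟩
    exact ⟨k, l, hk, by rw [← hz, hl]⟩
  · intro h
    have hy : ¬ 2 ∣ (y : ℕ) := by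
      obtain ⟨k, l, -, hk⟩ := h 1 one_pos
      have := hpow k
      omega
    refine ⟨⟨y, hy⟩, (@mem_closure_iff _ (padicTop 2) _ _).2 fun U hU hyU => ?_, rfl⟩
    obtain ⟨N, hN⟩ := exists_progression_subset hU hyU
    obtain ⟨k, l, hk, hkl⟩ := h (N + 1) N.succ_pos
    have hpos : 0 < a ^ k := by rw [hkl]; exact Nat.add_pos_left y.pos _
    exact ⟨⟨⟨a ^ k, hpos⟩, hpow k⟩, hN _ ⟨2 * l, by simp only [PNat.mk_coe]; rw [hkl]; ring⟩,
      k, hk, rfl⟩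

lemma not_two_dvd_of_sq {a c n : ℕ} (ha : a ^ 2 = 1 + 2 ^ (n + 1) * c) : ¬ 2 ∣ a := by
  intro h
  have h1 : 2 ∣ a ^ 2 := dvd_pow h two_ne_zero
  rw [ha, pow_succ, mul_assoc, mul_left_comm] at h1
  omega

/-- When `a ^ 2 - 1` has 2-adic valuation exactly `n + 1`, the closure of the powers of `a`
is the full preimage of the residues `1, a` modulo `2 ^ (n + 1)`. -/
lemma clPow_eq {a c n : ℕ} (hn : 1 ≤ n) (h1 : 1 < a) (hlt : a < 2 ^ (n + 1)) (hc : Odd c)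
    (ha : a ^ 2 = 1 + 2 ^ (n + 1) * c) :
    clPow 2 a = {y : ℕ+ | (y : ℕ) % 2 ^ (n + 1) = 1 ∨ (y : ℕ) % 2 ^ (n + 1) = a} := by
  ext y
  rw [mem_clPow_iff (not_two_dvd_of_sq ha)]
  have hsq : a ^ 2 ≡ 1 [MOD 2 ^ (n + 1)] := by
    rw [ha]; simp [Nat.ModEq]
  constructor
  · intro h
    obtain ⟨k, l, -, hk⟩ := h (n + 1) n.succ_pos
    have hy : (y : ℕ) % 2 ^ (n + 1) = a ^ k % 2 ^ (n + 1) := by rw [hk]; simp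
    rcases Nat.even_or_odd' k with ⟨s, rfl | rfl⟩
    · left
      rw [hy, pow_mul, (hsq.pow s), one_pow, Nat.mod_eq_of_lt (h1.trans hlt)]
    · right
      have h2 := (hsq.pow s).mul_right a
      rw [one_pow, one_mul, ← pow_mul, ← pow_succ] at h2
      rw [hy, h2, Nat.mod_eq_of_lt hlt]
  · intro h N _
    obtain ⟨r, hr⟩ : ∃ r : ℕ, (y : ℕ) % 2 ^ (n + 1) = a ^ r := by
      rcases h with h | h
      · exact ⟨0, by simpa using h⟩
      · exact ⟨1, by simpa using h⟩
    have hd : (2 : ℤ) ^ (n + 1) ∣ (a : ℤ) ^ r - (y : ℕ) := by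
      refine ⟨-((y : ℕ) / 2 ^ (n + 1) : ℕ), ?_⟩
      have h3 := Nat.mod_add_div (y : ℕ) (2 ^ (n + 1))
      rw [hr] at h3
      have h4 : ((y : ℕ) : ℤ) = (a : ℤ) ^ r + 2 ^ (n + 1) * (((y : ℕ) / 2 ^ (n + 1) : ℕ) : ℤ) := by
        exact_mod_cast h3.symm
      linarith
    obtain ⟨k, hk, hdiv⟩ := exists_pow_congr (c := (c : ℤ)) hn (by exact_mod_cast hc)
      (by exact_mod_cast ha) hd (y : ℕ) N
    -- the exponent exceeds `y`, hence so does the power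
    have hle : (y : ℕ) ≤ a ^ k := hk.trans (Nat.lt_pow_self h1).le
    have hN : (2 : ℤ) ^ N ∣ (a : ℤ) ^ k - (y : ℕ) := (pow_dvd_pow _ (by omega)).trans hdiv
    have hN' : 2 ^ N ∣ a ^ k - (y : ℕ) := by
      zify [hle]
      exact hN
    obtain ⟨l, hl⟩ := hN'
    exact ⟨k, l, y.pos.trans_le hk, by omega⟩

/-! ### The index -/

/-- The preimage of two residues modulo `2 ^ (n + 1)` has at most two residues at every level
`≤ n + 1` and exactly four at level `n + 2`. -/
lemma iX_eq {u n : ℕ} (hn : 1 ≤ n) (h1 : 1 < u) (hlt : u < 2 ^ (n + 1)) {X : Set ℕ+}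
    (hX : X = {y : ℕ+ | (y : ℕ) % 2 ^ (n + 1) = 1 ∨ (y : ℕ) % 2 ^ (n + 1) = u}) :
    iX 2 X = 2 ^ (n - 1) := by
  have hmem : ∀ y : ℕ+, y ∈ X ↔
      (y : ℕ) % 2 ^ (n + 1) = 1 ∨ (y : ℕ) % 2 ^ (n + 1) = u := by
    intro y; rw [hX]; rfl
  have hM : 2 ^ (n + 2) = 2 * 2 ^ (n + 1) := by ring
  have hsmall : ∀ m ≤ n + 1, (pin 2 m X).ncard ≤ 2 := by
    intro m hm
    have hsub : pin 2 m X ⊆ {((1 : ℕ) : ZMod (2 ^ m)), (u : ZMod (2 ^ m))} := by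
      rintro _ ⟨y, hy, rfl⟩
      have key : ((y : ℕ) : ZMod (2 ^ m)) = (((y : ℕ) % 2 ^ (n + 1) : ℕ) : ZMod (2 ^ m)) := by
        rw [ZMod.natCast_eq_natCast_iff]
        exact (Nat.mod_modEq _ _).symm.of_dvd (pow_dvd_pow 2 hm)
      rcases (hmem y).1 hy with h | h
      · left; simp only [key, h]
      · right; simp only [key, h]; rfl
    exact (Set.ncard_le_ncard hsub (Set.toFinite _)).trans ((Set.ncard_insert_le _ _).trans (by simp))
  have hsat : ∀ y : ℕ+, ((y : ℕ) : ZMod (2 ^ (n + 2))) ∈ pin 2 (n + 2) X → y ∈ X := by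
    rintro y ⟨z, hz, hzy⟩
    have h2 : (z : ℕ) ≡ (y : ℕ) [MOD 2 ^ (n + 1)] :=
      ((ZMod.natCast_eq_natCast_iff _ _ _).1 hzy).of_dvd (pow_dvd_pow 2 (by omega))
    rw [hmem] at hz ⊢
    rwa [← h2]
  have hcard : (pin 2 (n + 2) X).ncard = 4 := by
    have himg : pin 2 (n + 2) X = (fun t : ℕ => (t : ZMod (2 ^ (n + 2)))) ''
        (({1, u, 1 + 2 ^ (n + 1), u + 2 ^ (n + 1)} : Finset ℕ) : Set ℕ) := by
      ext w
      constructor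
      · rintro ⟨y, hy, rfl⟩
        refine ⟨(y : ℕ) % 2 ^ (n + 2), ?_, by simp⟩
        have h3 : (y : ℕ) % 2 ^ (n + 2) % 2 ^ (n + 1) = (y : ℕ) % 2 ^ (n + 1) :=
          Nat.mod_mod_of_dvd _ (pow_dvd_pow 2 (by omega))
        have h4 : (y : ℕ) % 2 ^ (n + 2) < 2 * 2 ^ (n + 1) := by
          rw [← hM]; exact Nat.mod_lt _ (by positivity)
        have h5 := (hmem y).1 hy
        rw [← h3] at h5
        generalize (y : ℕ) % 2 ^ (n + 2) = t at h4 h5 ⊢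
        simp only [Finset.coe_insert, Finset.coe_singleton, Set.mem_insert_iff,
          Set.mem_singleton_iff]
        generalize 2 ^ (n + 1) = M at *
        rcases lt_or_ge t M with h | h
        · rw [Nat.mod_eq_of_lt h] at h5
          omega
        · rw [Nat.mod_eq_sub_mod h, Nat.mod_eq_of_lt (by omega)] at h5
          omega
      · rintro ⟨t, ht, rfl⟩
        simp only [Finset.coe_insert, Finset.coe_singleton, Set.mem_insert_iff,
          Set.mem_singleton_iff] at ht
        refine ⟨⟨t, by omega⟩, (hmem _).2 ?_, rfl⟩
        simp only [PNat.mk_coe]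
        have e1 : 1 % 2 ^ (n + 1) = 1 := Nat.mod_eq_of_lt (by omega)
        have e2 : u % 2 ^ (n + 1) = u := Nat.mod_eq_of_lt hlt
        rcases ht with rfl | rfl | rfl | rfl
        · left; exact e1
        · right; exact e2
        · left; rw [Nat.add_mod_right]; exact e1
        · right; rw [Nat.add_mod_right]; exact e2
    rw [himg, Set.InjOn.ncard_image, Set.ncard_coe_finset]
    · rw [Finset.card_insert_of_notMem, Finset.card_insert_of_notMem,
        Finset.card_insert_of_notMem, Finset.card_singleton]
      all_goals simp only [Finset.mem_insert, Finset.mem_singleton]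
      all_goals omega
    · intro s hs t ht hst
      have h6 := (ZMod.natCast_eq_natCast_iff _ _ _).1 hst
      simp only [Finset.coe_insert, Finset.coe_singleton, Set.mem_insert_iff,
          Set.mem_singleton_iff] at hs ht
      exact h6.eq_of_lt_of_lt (by omega) (by omega)
  have hnX : nX 2 X = n + 2 := by
    have hin : n + 2 ∈ {m : ℕ | 0 < m ∧
        X = {y : ℕ+ | ((y : ℕ) : ZMod (2 ^ m)) ∈ pin 2 m X} ∧
          max 2 3 ≤ (pin 2 m X).ncard} :=
      ⟨by omega, Set.Subset.antisymm (fun y hy => ⟨y, hy, rfl⟩) hsat, by rw [hcard]; norm_num⟩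
    refine le_antisymm (Nat.sInf_le hin) (le_csInf ⟨_, hin⟩ ?_)
    rintro m ⟨-, -, hm⟩
    by_contra hlt'
    have := hsmall m (by omega)
    have h3 : 3 ≤ (pin 2 m X).ncard := (le_max_right 2 3).trans hm
    omega
  rw [iX, hnX, hcard, Nat.card_eq_fintype_card, ZMod.card_units_eq_totient,
    Nat.totient_prime_pow Nat.prime_two (by omega)]
  obtain ⟨k, rfl⟩ := Nat.exists_eq_add_of_le' hn
  have : 2 ^ (k + 1 + 2 - 1) * (2 - 1) = 2 ^ k * 4 := by
    rw [show k + 1 + 2 - 1 = k + 2 by omega]; ring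
  rw [this]
  simp

lemma mem_golombBasic_iff {a b : ℕ} (hab : a < b) (y : ℕ+) :
    y ∈ golombBasic a b ↔ (y : ℕ) % b = a := by
  constructor
  · rintro ⟨k, hk⟩
    rw [hk, Nat.add_mul_mod_self_left, Nat.mod_eq_of_lt hab]
  · intro h
    exact ⟨(y : ℕ) / b, by rw [← h, Nat.mod_add_div]⟩

/-- For `n ≥ 2`: `cl((1+2^n)^ℕ) ∈ 𝒳_2` equals `1 + 2^nℕ₀` and has index `2^{n-1}`;
`cl((2^n-1)^ℕ) ∈ 𝒳_2` equals `(1 + 2^{n+1}ℕ₀) ∪ (2^n - 1 + 2^{n+1}ℕ₀)` and has index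
`2^{n-1}`. -/
theorem clPow_two_adic_indices (n : ℕ) (hn : 2 ≤ n) :
    (clPow 2 (1 + 2 ^ n) ∈ XX 2 ∧
      clPow 2 (1 + 2 ^ n) = golombBasic 1 (2 ^ n) ∧
      iX 2 (clPow 2 (1 + 2 ^ n)) = 2 ^ (n - 1)) ∧
    (clPow 2 (2 ^ n - 1) ∈ XX 2 ∧
      clPow 2 (2 ^ n - 1) =
        golombBasic 1 (2 ^ (n + 1)) ∪ golombBasic (2 ^ n - 1) (2 ^ (n + 1)) ∧
      iX 2 (clPow 2 (2 ^ n - 1)) = 2 ^ (n - 1)) := by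
  have hdouble : 2 ^ (n + 1) = 2 * 2 ^ n := by ring
  have h4 : 4 ≤ 2 ^ n := le_trans (by norm_num) (Nat.pow_le_pow_right two_pos hn)
  obtain ⟨m, rfl⟩ := Nat.exists_eq_add_of_le' hn
  have heven : Even (2 ^ (m + 1)) := (even_two).pow_of_ne_zero (by omega)
  -- the two squares: `(2^n ± 1)^2 = 1 + 2^(n+1) * (2^(n-1) ± 1)`
  have hsq1 : (1 + 2 ^ (m + 2)) ^ 2 = 1 + 2 ^ (m + 2 + 1) * (1 + 2 ^ (m + 1)) := by ring
  have hsq2 : (2 ^ (m + 2) - 1) ^ 2 = 1 + 2 ^ (m + 2 + 1) * (2 ^ (m + 1) - 1) := by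
    have h5 : 1 ≤ 2 ^ (m + 2) := by omega
    have h6 : 1 ≤ 2 ^ (m + 1) := Nat.one_le_two_pow
    zify [h5, h6]
    ring
  have hc1 : Odd (1 + 2 ^ (m + 1)) := odd_one.add_even heven
  have hc2 : Odd (2 ^ (m + 1) - 1) := Nat.Even.sub_odd Nat.one_le_two_pow heven odd_one
  have hcl1 := clPow_eq (n := m + 2) (by omega) (by omega) (by omega) hc1 hsq1
  have hcl2 := clPow_eq (n := m + 2) (by omega) (by omega) (by omega) hc2 hsq2
  refine ⟨⟨⟨_, by omega, by omega, not_two_dvd_of_sq hsq1, rfl⟩, ?_,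
    iX_eq (by omega) (by omega) (by omega) hcl1⟩,
    ⟨⟨_, by omega, by omega, not_two_dvd_of_sq hsq2, rfl⟩, ?_,
    iX_eq (by omega) (by omega) (by omega) hcl2⟩⟩
  · rw [hcl1]
    ext y
    rw [mem_golombBasic_iff (by omega)]
    simp only [Set.mem_ofPred_eq]
    -- a residue modulo `2^(n+1)` reduces to `1` modulo `2^n` iff it is `1` or `1 + 2^n`
    have h7 : (y : ℕ) % 2 ^ (m + 2 + 1) % 2 ^ (m + 2) = (y : ℕ) % 2 ^ (m + 2) :=
      Nat.mod_mod_of_dvd _ (pow_dvd_pow 2 (by omega))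
    have h8 : (y : ℕ) % 2 ^ (m + 2 + 1) < 2 * 2 ^ (m + 2) := by
      rw [← hdouble]; exact Nat.mod_lt _ (by positivity)
    rw [← h7]
    generalize (y : ℕ) % 2 ^ (m + 2 + 1) = t at h8 ⊢
    rcases lt_or_ge t (2 ^ (m + 2)) with h | h
    · rw [Nat.mod_eq_of_lt h]
      omega
    · rw [Nat.mod_eq_sub_mod h, Nat.mod_eq_of_lt (a := t - 2 ^ (m + 2)) (by omega)]
      omega
  · rw [hcl2]
    ext y
    rw [Set.mem_union, mem_golombBasic_iff (by omega), mem_golombBasic_iff (by omega)]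
    rfl
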